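/- For every c ≥ 2 there is no twice continuously differentiable function u : (−∞, 0] → ℝ satisfying u''(z) + c u'(z) + u(z)(1 − u(z)) = 0 for all z ≤ 0, u(z) → 1 and u'(z) → 0 as z → −∞, u(z) > 0 for all z < 0, and u(0) = 0; that is, the half-line travelling-wave boundary value problem has no positive solution vanishing at the right endpoint when c ≥ 2. -/

import Mathlib

open Set Filter

/-!
With `v = u'`, the function `g(z) = e^{cz/2} (v + (c/2) u)` satisfies
`g' = e^{cz/2} ((c²/4 - 1) u + u²)`, which is nonnegative for `c ≥ 2` wherever `u ≥ 0`.
Since `u` and `v` have finite limits at `-∞`, `g → 0` there, and hence `g ≥ 0`. But `g` is the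
derivative of `z ↦ e^{cz/2} u(z)`, so the latter is nondecreasing, and it cannot be positive
at `-1` and vanish at `0`.
-/

/-- For every `c ≥ 2` there is no twice continuously differentiable
function `u : (−∞, 0] → ℝ` with `u'' + cu' + u(1 − u) = 0` on `(−∞, 0]`,
`u(z) → 1` and `u'(z) → 0` as `z → −∞`, `u > 0` on `(−∞, 0)`, and `u(0) = 0`. -/
theorem no_spreading_wave_for_fast_speeds (c : ℝ) (hc : 2 ≤ c) :
    ¬ ∃ u : ℝ → ℝ,
      ContDiffOn ℝ 2 u (Iic 0) ∧
      (∀ z ≤ (0 : ℝ),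
        derivWithin (derivWithin u (Iic 0)) (Iic 0) z
          + c * derivWithin u (Iic 0) z + u z * (1 - u z) = 0) ∧
      Tendsto u atBot (nhds 1) ∧
      Tendsto (derivWithin u (Iic 0)) atBot (nhds 0) ∧
      (∀ z < (0 : ℝ), 0 < u z) ∧
      u 0 = 0 := by
  rintro ⟨u, hu, hode, hlim, hlim', hpos, h0⟩
  have hud : DifferentiableOn ℝ u (Iic 0) := hu.differentiableOn (by norm_num)
  have hvd : DifferentiableOn ℝ (derivWithin u (Iic 0)) (Iic 0) :=
    (hu.derivWithin (m := 1) (uniqueDiffOn_Iic 0) (by norm_num)).differentiableOn (by norm_num)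
  have hu' : ∀ z < (0 : ℝ), HasDerivAt u (derivWithin u (Iic 0) z) z := fun z hz =>
    (hud z hz.le).hasDerivWithinAt.hasDerivAt (Iic_mem_nhds hz)
  have hv' : ∀ z < (0 : ℝ), HasDerivAt (derivWithin u (Iic 0))
      (derivWithin (derivWithin u (Iic 0)) (Iic 0) z) z := fun z hz =>
    (hvd z hz.le).hasDerivWithinAt.hasDerivAt (Iic_mem_nhds hz)
  set v := derivWithin u (Iic 0) with hv
  have hE : ∀ z : ℝ, HasDerivAt (fun z => Real.exp (c / 2 * z))
      (Real.exp (c / 2 * z) * (c / 2)) z := fun z => by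
    simpa using ((hasDerivAt_id z).const_mul (c / 2)).exp
  have hEc : Continuous (fun z : ℝ => Real.exp (c / 2 * z)) := by fun_prop
  let g : ℝ → ℝ := fun z => Real.exp (c / 2 * z) * (v z + c / 2 * u z)
  have hg' : ∀ z < (0 : ℝ), HasDerivAt g
      (Real.exp (c / 2 * z) * ((c ^ 2 / 4 - 1) * u z + u z ^ 2)) z := fun z hz => by
    refine ((hE z).mul ((hv' z hz).add ((hu' z hz).const_mul (c / 2)))).congr_deriv ?_
    simp only [Pi.add_apply]
    linear_combination Real.exp (c / 2 * z) * hode z hz.le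
  have hgmono : MonotoneOn g (Iic 0) := by
    refine monotoneOn_of_hasDerivWithinAt_nonneg (convex_Iic 0)
      (hEc.continuousOn.mul (hvd.continuousOn.add (continuousOn_const.mul hud.continuousOn)))
      (fun z hz => (hg' z (by simpa using hz)).hasDerivWithinAt) fun z hz => ?_
    have hz' : z < 0 := by simpa using hz
    have h1 := hpos z hz'
    have h2 : 0 ≤ c ^ 2 / 4 - 1 := by nlinarith
    positivity
  have hglim : Tendsto g atBot (nhds 0) := by
    have hexp : Tendsto (fun z : ℝ => Real.exp (c / 2 * z)) atBot (nhds 0) :=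
      Real.tendsto_exp_atBot.comp (tendsto_id.const_mul_atBot (by linarith))
    simpa using hexp.mul (hlim'.add (hlim.const_mul (c / 2)))
  have hgnn : ∀ z ≤ (0 : ℝ), 0 ≤ g z := fun z hz =>
    le_of_tendsto hglim ((eventually_le_atBot z).mono fun y hy => hgmono (hy.trans hz) hz hy)
  have hmono : MonotoneOn (fun z => Real.exp (c / 2 * z) * u z) (Iic 0) := by
    refine monotoneOn_of_hasDerivWithinAt_nonneg (f' := g) (convex_Iic 0)
      (hEc.continuousOn.mul hud.continuousOn) (fun z hz => ?_)
      fun z hz => hgnn z (mem_Iic.mp (interior_subset hz))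
    have hz' : z < 0 := by simpa using hz
    refine (((hE z).mul (hu' z hz')).congr_deriv ?_).hasDerivWithinAt
    simp only [g]
    ring
  have h := hmono (show (-1 : ℝ) ∈ Iic 0 by simp) (show (0 : ℝ) ∈ Iic 0 by simp) (by norm_num)
  have h1 := mul_pos (Real.exp_pos (c / 2 * (-1))) (hpos (-1) (by norm_num))
  simp only [h0, mul_zero] at h
  exact absurd h1 h.not_gt
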